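/- arXiv:1309.2793 — 4 statements merged into one kernel-verified Lean document; each statement's English description precedes it below -/
import Mathlib

section
/- Let w be an ε-web and suppose there exists a red graph G for w with I(G) ≥ 0. Then there exists an admissible red graph G̃ for w with I(G̃) ≥ I(G). -/
/-- Combinatorial model of an `ε`-web: regions (connected components of the complement in the
upper half-plane), edges (each adjacent to two regions, i.e. the data of the dual graph `D(w)`),
which regions are faces (bounded regions), which are disks, which triples of regions share a
vertex of the web, and the number of vertexless circles. -/
structure EpsilonWeb where
  /-- the boundary sequence of signs `ε` -/
  boundary : List Bool
  Region : Type
  Edge : Type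
  [fintypeRegion : Fintype Region]
  [fintypeEdge : Fintype Edge]
  [decEqRegion : DecidableEq Region]
  /-- the two regions adjacent to an edge of the web -/
  ends : Edge → Region × Region
  /-- `IsFace f` : the region `f` is a face (a bounded region not touching the boundary line) -/
  IsFace : Region → Prop
  /-- `IsDisk f` : the region `f` is diffeomorphic to a disk -/
  IsDisk : Region → Prop
  /-- `ShareVertex f₁ f₂ f₃` : the three regions share a vertex of the web -/
  ShareVertex : Region → Region → Region → Prop
  /-- number of vertexless circles of the web -/
  circles : ℕ

attribute [instance] EpsilonWeb.fintypeRegion EpsilonWeb.fintypeEdge EpsilonWeb.decEqRegion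

namespace EpsilonWeb

variable (w : EpsilonWeb)

/-- The degree of a region in the dual graph `D(w)`, i.e. its number of sides. -/
def degD (f : w.Region) : ℕ :=
  (Finset.univ.filter fun e : w.Edge => (w.ends e).1 = f).card +
  (Finset.univ.filter fun e : w.Edge => (w.ends e).2 = f).card

/-- A web is non-elliptic if it contains no vertexless circle, no digon and no square,
i.e. every face has at least 6 sides. -/
def NonElliptic : Prop := w.circles = 0 ∧ ∀ f : w.Region, w.IsFace f → 6 ≤ w.degD f

/-- The head of an edge with respect to an orientation `o`. -/
def head (o : w.Edge → Bool) (e : w.Edge) : w.Region :=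
  if o e then (w.ends e).2 else (w.ends e).1

/-- The tail of an edge with respect to an orientation `o`. -/
def tail (o : w.Edge → Bool) (e : w.Edge) : w.Region :=
  if o e then (w.ends e).1 else (w.ends e).2

end EpsilonWeb

/-- A red graph for a web `w` : a non-empty induced subgraph of the dual graph `D(w)` whose
vertices are faces diffeomorphic to disks, no three of which share a vertex of `w`. -/
structure RedGraph (w : EpsilonWeb) where
  verts : Finset w.Region
  nonempty : verts.Nonempty
  disks : ∀ f ∈ verts, w.IsFace f ∧ w.IsDisk f
  noTriple : ∀ f₁ f₂ f₃ : w.Region, w.ShareVertex f₁ f₂ f₃ →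
    ¬(f₁ ∈ verts ∧ f₂ ∈ verts ∧ f₃ ∈ verts)

namespace RedGraph

variable {w : EpsilonWeb} (G : RedGraph w)

/-- The edges of the red graph `G` : being an induced subgraph of `D(w)`, these are all edges of
`D(w)` with both endpoints in `V(G)`. -/
def edges : Finset w.Edge :=
  Finset.univ.filter fun e => (w.ends e).1 ∈ G.verts ∧ (w.ends e).2 ∈ G.verts

/-- The degree of a vertex in the red graph `G`. -/
def degG (f : w.Region) : ℕ :=
  (G.edges.filter fun e => (w.ends e).1 = f).card +
  (G.edges.filter fun e => (w.ends e).2 = f).card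

/-- The external degree `ed(f) = deg_{D(w)}(f) - 2 deg_G(f)`. -/
def extDeg (f : w.Region) : ℤ := (w.degD f : ℤ) - 2 * (G.degG f : ℤ)

/-- The level `i_o(f) = 2 - ed(f)/2 - #{edges of G pointing to f}` of a vertex `f` of `G`
with respect to an orientation `o`. -/
def level (o : w.Edge → Bool) (f : w.Region) : ℤ :=
  2 - G.extDeg f / 2 - ((G.edges.filter fun e => w.head o e = f).card : ℤ)

/-- An orientation is fitting if every vertex has non-negative level. -/
def Fitting (o : w.Edge → Bool) : Prop := ∀ f ∈ G.verts, 0 ≤ G.level o f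

/-- A red graph is admissible if it has a fitting orientation. -/
def Admissible : Prop := ∃ o : w.Edge → Bool, G.Fitting o

/-- The level `I(G)` of the red graph `G` (sum of the levels of its vertices; this quantity
is independent of the orientation: `I(G) = Σ_f (2 - ed(f)/2) - #E(G)`). -/
def ilevel : ℤ := (∑ f ∈ G.verts, (2 - G.extDeg f / 2)) - (G.edges.card : ℤ)

/-- An admissible red graph is exact if its level is 0. -/
def Exact : Prop := G.Admissible ∧ G.ilevel = 0

/-- A red graph is fair if every vertex has external degree at most 4. -/
def Fair : Prop := ∀ f ∈ G.verts, G.extDeg f ≤ 4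

/-- A red graph is nice if every vertex has external degree at most 2. -/
def Nice : Prop := ∀ f ∈ G.verts, G.extDeg f ≤ 2

/-- A minimal admissible red graph: an admissible red graph whose only admissible red
subgraph (admissible red graph with vertex set contained in `V(G)`) is itself. -/
def Minimal : Prop :=
  G.Admissible ∧ ∀ G' : RedGraph w, G'.Admissible → G'.verts ⊆ G.verts → G'.verts = G.verts

/-- Unoriented adjacency in the red graph. -/
def Adj (f g : w.Region) : Prop :=
  ∃ e ∈ G.edges, w.ends e = (f, g) ∨ w.ends e = (g, f)

/-- The red graph is connected. -/
def Connected : Prop :=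
  ∀ f ∈ G.verts, ∀ g ∈ G.verts, Relation.ReflTransGen G.Adj f g

/-- The red graph is a tree : connected and `#E + 1 = #V`. -/
def IsTree : Prop := G.Connected ∧ G.edges.card + 1 = G.verts.card

/-- Oriented adjacency with respect to an orientation `o`. -/
def OAdj (o : w.Edge → Bool) (f g : w.Region) : Prop :=
  ∃ e ∈ G.edges, w.tail o e = f ∧ w.head o e = g

/-- Strong connectivity: any vertex can be reached from any other by an oriented path. -/
def StronglyConnected (o : w.Edge → Bool) : Prop :=
  ∀ f ∈ G.verts, ∀ g ∈ G.verts, Relation.ReflTransGen (G.OAdj o) f g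

/-- A simple (unoriented) cycle with `k` vertices in the red graph: `k` pairwise distinct
vertices joined cyclically by `k` pairwise distinct edges. -/
def IsSimpleCycle (k : ℕ) : Prop :=
  ∃ (v : ZMod k → w.Region) (e : ZMod k → w.Edge),
    Function.Injective v ∧ Function.Injective e ∧
    ∀ i : ZMod k, e i ∈ G.edges ∧
      (w.ends (e i) = (v i, v (i + 1)) ∨ w.ends (e i) = (v (i + 1), v i))

end RedGraph

namespace RedAux

open Finset

variable {w : EpsilonWeb}

def bb (w : EpsilonWeb) (f : w.Region) : ℤ := (w.degD f : ℤ) / 2 - 2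

def EE (S : Finset w.Region) : Finset w.Edge :=
  Finset.univ.filter fun e => (w.ends e).1 ∈ S ∧ (w.ends e).2 ∈ S

def JJ (S : Finset w.Region) : ℤ := ((EE S).card : ℤ) - ∑ f ∈ S, bb w f

lemma ext_half (G : RedGraph w) (f : w.Region) :
    2 - G.extDeg f / 2 = (G.degG f : ℤ) - bb w f := by
  unfold RedGraph.extDeg bb
  omega

lemma sum_degG (G : RedGraph w) :
    ∑ f ∈ G.verts, (G.degG f : ℤ) = 2 * (G.edges.card : ℤ) := by
  have h1 : G.edges.card = ∑ f ∈ G.verts, (G.edges.filter fun e => (w.ends e).1 = f).card := by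
    apply Finset.card_eq_sum_card_fiberwise
    intro e he
    simp only [RedGraph.edges, coe_filter, Set.mem_setOf_eq] at he
    exact he.2.1
  have h2 : G.edges.card = ∑ f ∈ G.verts, (G.edges.filter fun e => (w.ends e).2 = f).card := by
    apply Finset.card_eq_sum_card_fiberwise
    intro e he
    simp only [RedGraph.edges, coe_filter, Set.mem_setOf_eq] at he
    exact he.2.2
  have : ∑ f ∈ G.verts, G.degG f = 2 * G.edges.card := by
    unfold RedGraph.degG
    rw [Finset.sum_add_distrib, ← h1, ← h2]
    ring
  exact_mod_cast this

lemma ilevel_eq (G : RedGraph w) : G.ilevel = JJ G.verts := by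
  unfold RedGraph.ilevel JJ
  simp only [ext_half]
  rw [Finset.sum_sub_distrib, sum_degG]
  change _ = (G.edges.card : ℤ) - _
  ring

lemma degG_eq (G : RedGraph w) (o : w.Edge → Bool) (f : w.Region) :
    G.degG f = (G.edges.filter fun e => w.head o e = f).card +
      (G.edges.filter fun e => w.tail o e = f).card := by
  unfold RedGraph.degG
  simp only [Finset.card_filter]
  rw [← Finset.sum_add_distrib, ← Finset.sum_add_distrib]
  apply Finset.sum_congr rfl
  intro e _
  unfold EpsilonWeb.head EpsilonWeb.tail
  by_cases h : o e = true
  · simp only [h, if_true]; exact add_comm _ _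
  · simp [h]

lemma level_eq (G : RedGraph w) (o : w.Edge → Bool) (f : w.Region) :
    G.level o f = ((G.edges.filter fun e => w.tail o e = f).card : ℤ) - bb w f := by
  unfold RedGraph.level
  rw [ext_half, degG_eq G o f]
  push_cast
  ring

open Classical in
lemma admissible_of_max (G : RedGraph w) (h0 : 0 ≤ JJ G.verts)
    (hmax : ∀ S ⊆ G.verts, S.Nonempty → JJ S ≤ JJ G.verts) : G.Admissible := by
  let n : w.Region → ℕ := fun f => if f ∈ G.verts then (bb w f).toNat else 0
  let t : (Σ f : w.Region, Fin (n f)) → Finset w.Edge := fun x =>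
    G.edges.filter fun e => (w.ends e).1 = x.1 ∨ (w.ends e).2 = x.1
  have hall : ∀ A : Finset (Σ f : w.Region, Fin (n f)), A.card ≤ (A.biUnion t).card := by
    intro A
    set T : Finset w.Region := A.image Sigma.fst with hT
    have hpos : ∀ f ∈ T, f ∈ G.verts ∧ (n f : ℤ) = bb w f := by
      intro f hf
      obtain ⟨⟨f', i⟩, _, rfl⟩ := Finset.mem_image.1 hf
      have hi : 0 < n f' := lt_of_le_of_lt (Nat.zero_le _) i.2
      simp only [n] at hi ⊢
      split_ifs at hi ⊢ with hm
      · exact ⟨hm, by omega⟩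
      · omega
    have hcard : A.card ≤ ∑ f ∈ T, n f := by
      have : A ⊆ T.sigma (fun f => (Finset.univ : Finset (Fin (n f)))) := by
        intro x hx
        simp only [Finset.mem_sigma, Finset.mem_univ, and_true]
        exact Finset.mem_image_of_mem _ hx
      simpa using Finset.card_le_card this
    have hTsub : T ⊆ G.verts := fun f hf => (hpos f hf).1
    have hsum : ((∑ f ∈ T, n f : ℕ) : ℤ) = ∑ f ∈ T, bb w f := by
      push_cast
      exact Finset.sum_congr rfl fun f hf => (hpos f hf).2
    have hJ : JJ (G.verts \ T) ≤ JJ G.verts := by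
      by_cases hne : (G.verts \ T).Nonempty
      · exact hmax _ Finset.sdiff_subset hne
      · rw [Finset.not_nonempty_iff_eq_empty] at hne
        rw [hne]
        simpa [JJ, EE] using h0
    have hE : G.edges ⊆ EE (G.verts \ T) ∪ A.biUnion t := by
      intro e he
      have he' := he
      simp only [RedGraph.edges, Finset.mem_filter, Finset.mem_univ, true_and] at he'
      by_cases h : (w.ends e).1 ∈ T ∨ (w.ends e).2 ∈ T
      · apply Finset.mem_union_right
        rw [Finset.mem_biUnion]
        rcases h with h | h
        · obtain ⟨x, hx, hxe⟩ := Finset.mem_image.1 h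
          exact ⟨x, hx, Finset.mem_filter.2 ⟨he, Or.inl hxe.symm⟩⟩
        · obtain ⟨x, hx, hxe⟩ := Finset.mem_image.1 h
          exact ⟨x, hx, Finset.mem_filter.2 ⟨he, Or.inr hxe.symm⟩⟩
      · apply Finset.mem_union_left
        push Not at h
        simp [EE, he', h]
    have hEc : G.edges.card ≤ (EE (G.verts \ T)).card + (A.biUnion t).card :=
      (Finset.card_le_card hE).trans (Finset.card_union_le _ _)
    have hsd := Finset.sum_sdiff (f := bb w) hTsub
    have hEE : (EE G.verts).card = G.edges.card := rfl
    unfold JJ at hJ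
    omega
  obtain ⟨φ, hinj, hφ⟩ := (Finset.all_card_le_biUnion_card_iff_exists_injective t).1 hall
  let o : w.Edge → Bool := fun e => decide (∃ x, φ x = e ∧ (w.ends e).1 = x.1)
  have htail : ∀ x, w.tail o (φ x) = x.1 := by
    intro x
    have hx := (Finset.mem_filter.1 (hφ x)).2
    unfold EpsilonWeb.tail
    by_cases h : (w.ends (φ x)).1 = x.1
    · have : o (φ x) = true := decide_eq_true ⟨x, rfl, h⟩
      simp [this, h]
    · have : o (φ x) = false := by
        apply decide_eq_false
        rintro ⟨y, hy, hy'⟩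
        rw [hinj hy] at hy'
        exact h hy'
      simp only [this]
      simpa using hx.resolve_left h
  refine ⟨o, fun f hf => ?_⟩
  rw [level_eq]
  have hle : n f ≤ (G.edges.filter fun e => w.tail o e = f).card := by
    have := Finset.card_le_card_of_injOn (s := (Finset.univ : Finset (Fin (n f))))
      (t := G.edges.filter fun e => w.tail o e = f) (fun i => φ ⟨f, i⟩)
      (by
        intro i _
        simp only [Finset.coe_filter, Set.mem_setOf_eq]
        exact ⟨(Finset.mem_filter.1 (hφ ⟨f, i⟩)).1, htail ⟨f, i⟩⟩)
      (by
        intro i _ j _ hij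
        simpa using hinj hij)
    simpa using this
  have hn : n f = (bb w f).toNat := if_pos hf
  omega

end RedAux

/-- Let `w` be an `ε`-web and suppose there exists a red graph `G` for `w` with `I(G) ≥ 0`.
Then there exists an admissible red graph `G̃` for `w` with `I(G̃) ≥ I(G)`. -/
theorem exists_admissible_of_nonneg_level (w : EpsilonWeb) (G : RedGraph w)
    (hG : 0 ≤ G.ilevel) :
    ∃ Gt : RedGraph w, Gt.Admissible ∧ G.ilevel ≤ Gt.ilevel := by
  obtain ⟨S, hS, hmax⟩ := Finset.exists_max_image
    (G.verts.powerset.filter fun S => S.Nonempty) (fun S => RedAux.JJ S)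
    ⟨G.verts, by simp [G.nonempty]⟩
  simp only [Finset.mem_filter, Finset.mem_powerset] at hS hmax
  have hle := hmax G.verts ⟨subset_rfl, G.nonempty⟩
  rw [RedAux.ilevel_eq] at hG
  let Gt : RedGraph w :=
    { verts := S
      nonempty := hS.2
      disks := fun f hf => G.disks f (hS.1 hf)
      noTriple := fun a b c h hh =>
        G.noTriple a b c h ⟨hS.1 hh.1, hS.1 hh.2.1, hS.1 hh.2.2⟩ }
  refine ⟨Gt, RedAux.admissible_of_max Gt (hG.trans hle) ?_, ?_⟩
  · intro S' hS' hne
    exact hmax S' ⟨hS'.trans hS.1, hne⟩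
  · rw [RedAux.ilevel_eq, RedAux.ilevel_eq]
    exact hle
end

section
/- Let w be an ε-web and G a minimal admissible red graph for w, endowed with a fitting orientation. Then there is no non-trivial partition of V(G) into sets V₁ and V₂ such that every edge between a vertex of V₁ and a vertex of V₂ is oriented from V₁ to V₂. In particular G has no leaf, and if it has at least 2 vertices it is not a tree. -/
namespace RedGraph

theorem aux_deg {w : EpsilonWeb} (G : RedGraph w) (o : w.Edge → Bool) (f : w.Region) :
    G.degG f = (G.edges.filter fun e => w.head o e = f).card +
      (G.edges.filter fun e => w.tail o e = f).card := by
  unfold degG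
  simp only [Finset.card_filter, ← Finset.sum_add_distrib]
  refine Finset.sum_congr rfl fun e _ => ?_
  unfold EpsilonWeb.head EpsilonWeb.tail
  cases o e <;> simp [add_comm]

theorem aux_level {w : EpsilonWeb} (G : RedGraph w) (o : w.Edge → Bool) (f : w.Region) :
    G.level o f = 2 - (w.degD f : ℤ) / 2 +
      ((G.edges.filter fun e => w.tail o e = f).card : ℤ) := by
  have h := G.aux_deg o f
  unfold level extDeg
  omega

theorem aux_sum {w : EpsilonWeb} (G : RedGraph w) :
    ∑ f ∈ G.verts, G.degG f = 2 * G.edges.card := by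
  unfold degG
  rw [Finset.sum_add_distrib, two_mul]
  congr 1
  · refine (Finset.card_eq_sum_card_fiberwise fun e he => ?_).symm
    have : e ∈ G.edges := he
    simp only [edges, Finset.mem_filter] at this
    exact this.2.1
  · refine (Finset.card_eq_sum_card_fiberwise fun e he => ?_).symm
    have : e ∈ G.edges := he
    simp only [edges, Finset.mem_filter] at this
    exact this.2.2

theorem aux_cut {w : EpsilonWeb} (G : RedGraph w) (hG : G.Minimal)
    (o : w.Edge → Bool) (ho : G.Fitting o) :
    (¬ ∃ V₁ V₂ : Finset w.Region, V₁.Nonempty ∧ V₂.Nonempty ∧ Disjoint V₁ V₂ ∧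
        V₁ ∪ V₂ = G.verts ∧
        ∀ e ∈ G.edges,
          (((w.ends e).1 ∈ V₁ ∧ (w.ends e).2 ∈ V₂) ∨
            ((w.ends e).1 ∈ V₂ ∧ (w.ends e).2 ∈ V₁)) → w.head o e ∈ V₂) := by
  rintro ⟨V₁, V₂, ⟨a, ha⟩, h2, hd, hu, he⟩
  have hsub : V₂ ⊆ G.verts := hu ▸ Finset.subset_union_right
  let G' : RedGraph w := ⟨V₂, h2, fun f hf => G.disks f (hsub hf),
    fun a b c h hh => G.noTriple a b c h ⟨hsub hh.1, hsub hh.2.1, hsub hh.2.2⟩⟩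
  have hadm : G'.Admissible := by
    refine ⟨o, fun f hf => ?_⟩
    have hf2 : f ∈ V₂ := hf
    have h0 := ho f (hsub hf2)
    rw [aux_level] at h0 ⊢
    have hle : (G.edges.filter fun e => w.tail o e = f).card ≤
        (G'.edges.filter fun e => w.tail o e = f).card := by
      refine Finset.card_le_card fun e hm => ?_
      rw [Finset.mem_filter] at hm ⊢
      refine ⟨?_, hm.2⟩
      have hE := he e hm.1
      have h3 := hm.1
      have h4 := hm.2
      simp only [edges, Finset.mem_filter, Finset.mem_univ, true_and, ← hu,
        Finset.mem_union] at h3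
      simp only [edges, Finset.mem_filter, Finset.mem_univ, true_and, G']
      rw [Finset.disjoint_left] at hd
      unfold EpsilonWeb.head at hE
      unfold EpsilonWeb.tail at h4
      cases hoe : o e <;> simp [hoe] at hE h4 <;> subst h4 <;> grind
    omega
  have := hG.2 G' hadm hsub
  have h5 : a ∈ V₂ := by
    change a ∈ G'.verts
    rw [this, ← hu]
    exact Finset.mem_union_left _ ha
  exact Finset.disjoint_left.1 hd ha h5

theorem aux_leaf {w : EpsilonWeb} (G : RedGraph w) (hG : G.Minimal)
    (o : w.Edge → Bool) (ho : G.Fitting o) : ∀ f ∈ G.verts, G.degG f ≠ 1 := by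
  intro f hf h1
  have hc := G.aux_cut hG o ho
  have hd := G.aux_deg o f
  have hmem : ∀ e ∈ G.edges, w.head o e ∈ G.verts ∧ w.tail o e ∈ G.verts := by
    intro e he
    simp only [edges, Finset.mem_filter] at he
    unfold EpsilonWeb.head EpsilonWeb.tail
    cases o e <;> simp [he.2]
  have hends : ∀ e, (w.head o e = (w.ends e).1 ∧ w.tail o e = (w.ends e).2) ∨
      (w.head o e = (w.ends e).2 ∧ w.tail o e = (w.ends e).1) := by
    intro e
    unfold EpsilonWeb.head EpsilonWeb.tail
    cases o e <;> simp
  have hun : {f} ∪ G.verts.erase f = G.verts := by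
    ext x; simp only [Finset.mem_union, Finset.mem_singleton, Finset.mem_erase]; grind
  have hdj : Disjoint {f} (G.verts.erase f) := by simp
  apply hc
  by_cases hz : (G.edges.filter fun e => w.head o e = f).card = 0
  · -- the unique edge leaves f
    have ht : (G.edges.filter fun e => w.tail o e = f).card = 1 := by omega
    rw [Finset.card_eq_zero, Finset.filter_eq_empty_iff] at hz
    obtain ⟨e, he⟩ := Finset.card_pos.1 (by omega : 0 < (G.edges.filter fun e => w.tail o e = f).card)
    rw [Finset.mem_filter] at he
    refine ⟨{f}, G.verts.erase f, ⟨f, by simp⟩,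
      ⟨w.head o e, Finset.mem_erase.2 ⟨hz he.1, (hmem e he.1).1⟩⟩, hdj, hun, ?_⟩
    intro e' he' _
    exact Finset.mem_erase.2 ⟨hz he', (hmem e' he').1⟩
  · have hz' : (G.edges.filter fun e => w.tail o e = f).card = 0 := by omega
    rw [Finset.card_eq_zero, Finset.filter_eq_empty_iff] at hz'
    obtain ⟨e, he⟩ := Finset.card_pos.1 (Nat.pos_of_ne_zero hz)
    rw [Finset.mem_filter] at he
    refine ⟨G.verts.erase f, {f},
      ⟨w.tail o e, Finset.mem_erase.2 ⟨hz' he.1, (hmem e he.1).2⟩⟩, ⟨f, by simp⟩, hdj.symm,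
      by rw [Finset.union_comm, hun], ?_⟩
    intro e' he' h
    have := hz' he'
    have := hends e'
    simp only [Finset.mem_singleton] at h ⊢
    grind

theorem aux_tree {w : EpsilonWeb} (G : RedGraph w) (hl : ∀ f ∈ G.verts, G.degG f ≠ 1)
    (h2 : 2 ≤ G.verts.card) : ¬ G.IsTree := by
  rintro ⟨hc, hcard⟩
  have hdeg : ∀ f ∈ G.verts, 2 ≤ G.degG f := by
    intro f hf
    obtain ⟨g, hg, hne⟩ := Finset.exists_mem_ne (by omega : 1 < G.verts.card) f
    have hpos : 0 < G.degG f := by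
      rcases Relation.ReflTransGen.cases_head (hc f hf g hg) with h | ⟨c, ⟨e, he, h⟩, _⟩
      · exact absurd h.symm hne
      · unfold degG
        rcases h with h | h
        · exact Nat.add_pos_left (Finset.card_pos.2 ⟨e, by simp [he, h]⟩) _
        · exact Nat.add_pos_right _ (Finset.card_pos.2 ⟨e, by simp [he, h]⟩)
    have := hl f hf
    omega
  have h := Finset.card_nsmul_le_sum G.verts G.degG 2 hdeg
  rw [aux_sum, smul_eq_mul] at h
  omega

end RedGraph

/-- Let `w` be an `ε`-web and `G` a minimal admissible red graph for `w`, endowed with a fitting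
orientation `o`.  Then there is no non-trivial partition of `V(G)` into sets `V₁` and `V₂` such
that every edge between a vertex of `V₁` and a vertex of `V₂` is oriented from `V₁` to `V₂`.
In particular `G` has no leaf, and if it has at least 2 vertices it is not a tree. -/
theorem minimal_red_graph_no_cut (w : EpsilonWeb) (G : RedGraph w) (hG : G.Minimal)
    (o : w.Edge → Bool) (ho : G.Fitting o) :
    (¬ ∃ V₁ V₂ : Finset w.Region, V₁.Nonempty ∧ V₂.Nonempty ∧ Disjoint V₁ V₂ ∧
        V₁ ∪ V₂ = G.verts ∧
        ∀ e ∈ G.edges,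
          (((w.ends e).1 ∈ V₁ ∧ (w.ends e).2 ∈ V₂) ∨
            ((w.ends e).1 ∈ V₂ ∧ (w.ends e).2 ∈ V₁)) → w.head o e ∈ V₂) ∧
    (∀ f ∈ G.verts, G.degG f ≠ 1) ∧
    (2 ≤ G.verts.card → ¬ G.IsTree) := by
  exact ⟨G.aux_cut hG o ho, G.aux_leaf hG o ho, G.aux_tree (G.aux_leaf hG o ho)⟩
end

section
/- If G is an admissible red graph for a non-elliptic ε-web w, then G is not a tree. -/
/-- If `G` is an admissible red graph for a non-elliptic `ε`-web `w`, then `G` is not a tree. -/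
theorem admissible_red_graph_not_tree (w : EpsilonWeb) (hw : w.NonElliptic)
    (G : RedGraph w) (hG : G.Admissible) : ¬ G.IsTree := by
  rintro ⟨-, hT⟩
  obtain ⟨o, ho⟩ := hG
  have h1 : G.edges.card = ∑ f ∈ G.verts, (G.edges.filter fun e => (w.ends e).1 = f).card :=
    Finset.card_eq_sum_card_fiberwise fun e he => by
      have := (Finset.mem_filter.mp he).2
      exact this.1
  have h2 : G.edges.card = ∑ f ∈ G.verts, (G.edges.filter fun e => (w.ends e).2 = f).card :=
    Finset.card_eq_sum_card_fiberwise fun e he => by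
      have := (Finset.mem_filter.mp he).2
      exact this.2
  have h3 : G.edges.card = ∑ f ∈ G.verts, (G.edges.filter fun e => w.head o e = f).card :=
    Finset.card_eq_sum_card_fiberwise fun e he => by
      have := (Finset.mem_filter.mp he).2
      unfold EpsilonWeb.head
      split
      · exact this.2
      · exact this.1
  have key : ∑ f ∈ G.verts, (1 + (G.edges.filter fun e => w.head o e = f).card) ≤
      ∑ f ∈ G.verts, ((G.edges.filter fun e => (w.ends e).1 = f).card +
        (G.edges.filter fun e => (w.ends e).2 = f).card) := by
    refine Finset.sum_le_sum fun f hf => ?_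
    have a := ho f hf
    have b := hw.2 f (G.disks f hf).1
    unfold RedGraph.level RedGraph.extDeg RedGraph.degG at a
    omega
  rw [Finset.sum_add_distrib, Finset.sum_add_distrib, ← h1, ← h2, ← h3] at key
  simp at key
  omega
end

section
/- Let w be a non-elliptic ε-web and G a minimal admissible red graph for w. If G is endowed with a fitting orientation, then it is strongly connected: for any two vertices v₁, v₂ of G there is an oriented path from v₁ to v₂. -/
theorem RedGraph.degG_eq {w : EpsilonWeb} (G : RedGraph w) (o : w.Edge → Bool) (f : w.Region) :
    G.degG f = (G.edges.filter fun e => w.head o e = f).card +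
      (G.edges.filter fun e => w.tail o e = f).card := by
  unfold RedGraph.degG
  simp only [Finset.card_filter]
  rw [← Finset.sum_add_distrib, ← Finset.sum_add_distrib]
  refine Finset.sum_congr rfl fun e _ => ?_
  unfold EpsilonWeb.head EpsilonWeb.tail
  cases o e <;> simp [add_comm]

theorem RedGraph.level_eq {w : EpsilonWeb} (G : RedGraph w) (o : w.Edge → Bool) (f : w.Region) :
    G.level o f = 2 - (w.degD f : ℤ) / 2 +
      ((G.edges.filter fun e => w.tail o e = f).card : ℤ) := by
  have h := G.degG_eq o f
  unfold RedGraph.level RedGraph.extDeg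
  omega

theorem RedGraph.mem_edges {w : EpsilonWeb} (G : RedGraph w) (o : w.Edge → Bool) (e : w.Edge) :
    e ∈ G.edges ↔ w.tail o e ∈ G.verts ∧ w.head o e ∈ G.verts := by
  unfold RedGraph.edges EpsilonWeb.head EpsilonWeb.tail
  cases o e <;> simp [and_comm]

/-- Let `w` be a non-elliptic `ε`-web and `G` a minimal admissible red graph for `w`.  If `G` is
endowed with a fitting orientation, then it is strongly connected: for any two vertices `v₁`,
`v₂` of `G` there is an oriented path from `v₁` to `v₂`. -/
theorem minimal_red_graph_strongly_connected (w : EpsilonWeb) (hw : w.NonElliptic)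
    (G : RedGraph w) (hG : G.Minimal) (o : w.Edge → Bool) (ho : G.Fitting o) :
    G.StronglyConnected o := by
  classical
  intro f hf g hg
  let G' : RedGraph w :=
    { verts := G.verts.filter fun x => Relation.ReflTransGen (G.OAdj o) f x
      nonempty := ⟨f, Finset.mem_filter.2 ⟨hf, Relation.ReflTransGen.refl⟩⟩
      disks := fun x hx => G.disks x (Finset.mem_filter.1 hx).1
      noTriple := fun a b c h hh => G.noTriple a b c h
        ⟨(Finset.mem_filter.1 hh.1).1, (Finset.mem_filter.1 hh.2.1).1,
          (Finset.mem_filter.1 hh.2.2).1⟩ }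
  have hmem : ∀ x, x ∈ G'.verts ↔ x ∈ G.verts ∧ Relation.ReflTransGen (G.OAdj o) f x :=
    fun x => Finset.mem_filter
  have hfit : G'.Fitting o := by
    intro x hx
    have hx' := (hmem x).1 hx
    have h := ho x hx'.1
    rw [RedGraph.level_eq] at h ⊢
    have : (G'.edges.filter fun e => w.tail o e = x) =
        (G.edges.filter fun e => w.tail o e = x) := by
      ext e
      simp only [Finset.mem_filter]
      refine and_congr_left fun ht => ?_
      constructor
      · intro he
        rw [RedGraph.mem_edges _ o] at he ⊢
        exact ⟨((hmem _).1 he.1).1, ((hmem _).1 he.2).1⟩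
      · intro he
        have he' := (RedGraph.mem_edges _ o e).1 he
        rw [RedGraph.mem_edges _ o]
        refine ⟨ht ▸ hx, (hmem _).2 ⟨he'.2, hx'.2.tail ⟨e, he, ht, rfl⟩⟩⟩
    rw [this]
    exact h
  have heq := hG.2 G' ⟨o, hfit⟩ (Finset.filter_subset _ _)
  exact ((hmem g).1 (heq ▸ hg)).2
end
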